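/- Let η > 0, m ∈ ℕ, λ_k ∈ (0,∞) and α_k, β_k ∈ ℂ for k = 1,…,m, and set κ_k = λ_k η. Assume D₀ = 1 − Σ_{k=1}^m (α_k + β_k) cos κ_k + Σ_{i,j=1}^m α_i β_j cos(κ_i − κ_j) ≠ 0. Then for every continuous g : [0,∞) → ℂ and every a, c ∈ ℂ there exists exactly one twice continuously differentiable function w : [0,∞) → ℂ satisfying w''(t) + η² w(t) = g(t) for all t ≥ 0, together with the multipoint conditions w(0) = a + Σ_{k=1}^m α_k w(λ_k) and w'(0) = c + Σ_{k=1}^m β_k w'(λ_k). -/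

import Mathlib

/-!
STATEMENT 3: frequency-wise content of Lemma 2.1.  For `η > 0`, `λ_k > 0`,
complex `α_k, β_k` with `D₀ ≠ 0` (`κ_k = λ_k η`), for every continuous `g` and
every `a, c ∈ ℂ` there is exactly one twice continuously differentiable
`w : [0,∞) → ℂ` with `w'' + η² w = g` on `[0,∞)` and the multipoint conditions
`w 0 = a + Σ α_k w(λ_k)`, `w' 0 = c + Σ β_k w'(λ_k)`.
-/

noncomputable section

open Set

/-- `w` solves the oscillator equation with multipoint conditions on `[0,∞)`. -/
def IsMultipointOscSol (η : ℝ) {m : ℕ} (lam : Fin m → ℝ) (α β : Fin m → ℂ)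
    (g : ℝ → ℂ) (a c : ℂ) (w : ℝ → ℂ) : Prop :=
  ContDiffOn ℝ 2 w (Set.Ici 0)
    ∧ (∀ t : ℝ, 0 ≤ t →
        derivWithin (derivWithin w (Set.Ici 0)) (Set.Ici 0) t + (η : ℂ) ^ 2 * w t = g t)
    ∧ w 0 = a + ∑ k, α k * w (lam k)
    ∧ derivWithin w (Set.Ici 0) 0 = c + ∑ k, β k * derivWithin w (Set.Ici 0) (lam k)

/-!
Put `C t = cos (η t)` and `S t = ∫₀ᵗ cos (η s) ds`, which is `sin (η t) / η` when `η ≠ 0`. If `P` is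
the solution with zero Cauchy data and velocity `Q`, every solution `w` with velocity `v` is
`w = C • w 0 + S • v 0 + P`, `v = C • v 0 - η² S • w 0 + Q`. The multipoint conditions thus become
a linear system for the pair `(w 0, v 0)`, whose determinant
`(1 - ∑ αₖ C(λₖ)) (1 - ∑ βₖ C(λₖ)) + η² (∑ αₖ S(λₖ)) (∑ βₖ S(λₖ))` is `D₀` by the addition formula
for the cosine.
-/

theorem hasDerivWithinAt_integral_Ici {E : Type*} [NormedAddCommGroup E] [NormedSpace ℝ E]
    [CompleteSpace E] {f : ℝ → E} {a t : ℝ} (hf : ContinuousOn f (Ici a)) (ht : t ∈ Ici a) :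
    HasDerivWithinAt (fun u => ∫ s in a..u, f s) (f t) (Ici a) t := by
  have hF : Continuous (fun s => f (max a s)) :=
    hf.comp_continuous (by fun_prop) fun s => le_max_left a s
  have hint : ∀ u ∈ Ici a, ∫ s in a..u, f s = ∫ s in a..u, f (max a s) := fun u hu =>
    intervalIntegral.integral_congr fun s hs => by
      rw [uIcc_of_le hu] at hs
      simp only [max_eq_right hs.1]
  have hderiv := (hF.integral_hasStrictDerivAt a t).hasDerivAt.hasDerivWithinAt (s := Ici a)
  rw [max_eq_right (mem_Ici.mp ht)] at hderiv
  exact hderiv.congr hint (hint t ht)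

theorem existsUnique_linear_system_of_det_ne_zero {K V : Type*} [Field K] [AddCommGroup V]
    [Module K V] {a b c d : K} (hdet : a * d - b * c ≠ 0) (p q : V) :
    ∃! z : V × V, a • z.1 - b • z.2 = p ∧ d • z.2 - c • z.1 = q := by
  have hinv : (a * d - b * c)⁻¹ * (a * d - b * c) = 1 := inv_mul_cancel₀ hdet
  refine ⟨((a * d - b * c)⁻¹ • (d • p + b • q), (a * d - b * c)⁻¹ • (c • p + a • q)),
    ⟨?_, ?_⟩, ?_⟩
  · linear_combination (norm := module) hinv • p
  · linear_combination (norm := module) hinv • q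
  · rintro ⟨x, y⟩ ⟨rfl, rfl⟩
    ext
    · linear_combination (norm := module) -hinv • x
    · linear_combination (norm := module) -hinv • y

section FundamentalSystem

open Complex (cos sin)

/-- The solution of `y'' + η² y = 0` with `y 0 = 0` and `y' 0 = 1`. The integral stands for
`sin (η t) / η` so that the value at `η = 0` is the correct one, namely `t`. -/
def oscSine (η : ℂ) (t : ℝ) : ℂ :=
  ∫ s in (0 : ℝ)..t, cos (η * s)

theorem hasDerivAt_sin_const_mul_ofReal (η : ℂ) (t : ℝ) :
    HasDerivAt (fun s : ℝ => sin (η * s)) (η * cos (η * t)) t := by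
  simpa [mul_comm] using ((hasDerivAt_id (t : ℂ)).const_mul η).csin.comp_ofReal

theorem mul_oscSine (η : ℂ) (t : ℝ) : η * oscSine η t = sin (η * t) := by
  rw [oscSine, ← intervalIntegral.integral_const_mul,
    intervalIntegral.integral_eq_sub_of_hasDerivAt
      (fun s _ => hasDerivAt_sin_const_mul_ofReal η s)
      (Continuous.intervalIntegrable (by fun_prop) _ _)]
  simp

theorem oscSine_zero (η : ℂ) : oscSine η 0 = 0 :=
  intervalIntegral.integral_same

theorem hasDerivAt_oscSine (η : ℂ) (t : ℝ) : HasDerivAt (oscSine η) (cos (η * t)) t :=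
  (Continuous.integral_hasStrictDerivAt (by fun_prop) 0 t).hasDerivAt

theorem continuous_oscSine (η : ℂ) : Continuous (oscSine η) :=
  continuous_iff_continuousAt.mpr fun t => (hasDerivAt_oscSine η t).continuousAt

theorem hasDerivAt_cos_const_mul_ofReal (η : ℂ) (t : ℝ) :
    HasDerivAt (fun s : ℝ => cos (η * s)) (-(η ^ 2 * oscSine η t)) t := by
  have h := ((hasDerivAt_id (t : ℂ)).const_mul η).ccos.comp_ofReal
  refine h.congr_deriv ?_
  simp only [id_eq, mul_one]
  linear_combination η * mul_oscSine η t

theorem cos_sq_add_sq_mul_oscSine_sq (η : ℂ) (t : ℝ) :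
    cos (η * t) ^ 2 + η ^ 2 * oscSine η t ^ 2 = 1 := by
  rw [← mul_pow, mul_oscSine, Complex.cos_sq_add_sin_sq]

theorem multipoint_det_eq {ι : Type*} [Fintype ι] (η : ℂ) (lam : ι → ℝ) (α β : ι → ℂ) :
    1 - ∑ k, (α k + β k) * cos (lam k * η)
        + ∑ i, ∑ j, α i * β j * cos (lam i * η - lam j * η)
      = (1 - ∑ k, α k * cos (η * lam k)) * (1 - ∑ k, β k * cos (η * lam k))
        - (∑ k, α k * oscSine η (lam k)) * ∑ k, β k * -(η ^ 2 * oscSine η (lam k)) := by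
  have cos_sub_eq (i j : ι) : cos (lam i * η - lam j * η)
      = cos (η * lam i) * cos (η * lam j) + η ^ 2 * oscSine η (lam i) * oscSine η (lam j) := by
    rw [mul_comm _ η, mul_comm _ η, Complex.cos_sub, ← mul_oscSine, ← mul_oscSine]
    ring
  have double_sum : ∑ i, ∑ j, α i * β j * cos (lam i * η - lam j * η)
      = (∑ k, α k * cos (η * lam k)) * (∑ k, β k * cos (η * lam k))
        - (∑ k, α k * oscSine η (lam k)) * ∑ k, β k * -(η ^ 2 * oscSine η (lam k)) := by
    simp only [Finset.sum_mul_sum, ← Finset.sum_sub_distrib, cos_sub_eq]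
    exact Finset.sum_congr rfl fun i _ => Finset.sum_congr rfl fun j _ => by ring
  rw [double_sum]
  simp only [mul_comm _ η, add_mul, Finset.sum_add_distrib]
  ring

end FundamentalSystem

section ForcedOscillator

open Complex (cos)

variable {E : Type*} [NormedAddCommGroup E] [NormedSpace ℂ E] {η : ℂ} {g w v w' v' : ℝ → E}

/-- `w` is a solution of `w'' + η² w = g` on `[0, ∞)` with velocity `v`: the first-order system
in the phase variables `(w, v)`, with one-sided derivatives at `0`. -/
structure IsOscillatorSolution (η : ℂ) (g w v : ℝ → E) : Prop where
  hasDerivWithinAt : ∀ t ∈ Ici (0 : ℝ), HasDerivWithinAt w (v t) (Ici 0) t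
  hasDerivWithinAt_velocity :
    ∀ t ∈ Ici (0 : ℝ), HasDerivWithinAt v (g t - η ^ 2 • w t) (Ici 0) t

namespace IsOscillatorSolution

theorem eqOn_of_initial_eq (hw : IsOscillatorSolution η g w v)
    (hw' : IsOscillatorSolution η g w' v') (h₀ : w 0 = w' 0) (h₁ : v 0 = v' 0) :
    EqOn w w' (Ici 0) ∧ EqOn v v' (Ici 0) := by
  let A : E × E →L[ℂ] E × E :=
    (ContinuousLinearMap.snd ℂ E E).prod (-(η ^ 2 • ContinuousLinearMap.fst ℂ E E))
  let field (t : ℝ) (z : E × E) : E × E := A z + (0, g t)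
  have hlip (t : ℝ) : LipschitzWith (‖A‖₊ + 0) (field t) :=
    A.lipschitz.add (LipschitzWith.const _)
  have phase_deriv {x y : ℝ → E} (h : IsOscillatorSolution η g x y) :
      ∀ t ∈ Ici (0 : ℝ), HasDerivWithinAt (fun s => (x s, y s)) (field t (x t, y t)) (Ici 0) t :=
    fun t ht => ((h.hasDerivWithinAt t ht).prodMk (h.hasDerivWithinAt_velocity t ht)).congr_deriv <|
      Prod.ext (by simp [field, A]) (by simp [field, A, sub_eq_neg_add])
  have phase_eq : ∀ t ∈ Ici (0 : ℝ), (w t, v t) = (w' t, v' t) := fun t ht =>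
    ODE_solution_unique (v := field) (a := 0) (b := t) hlip
      (fun s hs => (phase_deriv hw s hs.1).continuousWithinAt.mono Icc_subset_Ici_self)
      (fun s hs => (phase_deriv hw s hs.1).mono (Ici_subset_Ici.mpr hs.1))
      (fun s hs => (phase_deriv hw' s hs.1).continuousWithinAt.mono Icc_subset_Ici_self)
      (fun s hs => (phase_deriv hw' s hs.1).mono (Ici_subset_Ici.mpr hs.1))
      (Prod.ext h₀ h₁) (right_mem_Icc.mpr ht)
  exact ⟨fun t ht => congrArg Prod.fst (phase_eq t ht),
    fun t ht => congrArg Prod.snd (phase_eq t ht)⟩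

theorem add_homogeneous (hw : IsOscillatorSolution η g w v) (x y : E) :
    IsOscillatorSolution η g (fun t => cos (η * t) • x + oscSine η t • y + w t)
      (fun t => cos (η * t) • y + (-(η ^ 2 * oscSine η t)) • x + v t) where
  hasDerivWithinAt t ht := by
    have h := ((((hasDerivAt_cos_const_mul_ofReal η t).smul_const x).add
      ((hasDerivAt_oscSine η t).smul_const y)).hasDerivWithinAt).add (hw.hasDerivWithinAt t ht)
    exact h.congr_deriv (by module)
  hasDerivWithinAt_velocity t ht := by
    have h := ((((hasDerivAt_cos_const_mul_ofReal η t).smul_const y).add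
      (((hasDerivAt_oscSine η t).const_mul (η ^ 2)).neg.smul_const x)).hasDerivWithinAt).add
      (hw.hasDerivWithinAt_velocity t ht)
    exact h.congr_deriv (by module)

theorem eqOn_add_homogeneous {P Q : ℝ → E} (hP : IsOscillatorSolution η g P Q) (hP₀ : P 0 = 0)
    (hQ₀ : Q 0 = 0) (hw : IsOscillatorSolution η g w v) :
    EqOn w (fun t => cos (η * t) • w 0 + oscSine η t • v 0 + P t) (Ici 0) ∧
      EqOn v (fun t => cos (η * t) • v 0 + (-(η ^ 2 * oscSine η t)) • w 0 + Q t) (Ici 0) :=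
  hw.eqOn_of_initial_eq (hP.add_homogeneous (w 0) (v 0)) (by simp [oscSine_zero, hP₀])
    (by simp [oscSine_zero, hQ₀])

theorem derivWithin_eqOn (hw : IsOscillatorSolution η g w v) :
    EqOn (derivWithin w (Ici 0)) v (Ici 0) := fun t ht =>
  (hw.hasDerivWithinAt t ht).derivWithin (uniqueDiffOn_Ici 0 t ht)

theorem derivWithin_derivWithin_eqOn (hw : IsOscillatorSolution η g w v) :
    EqOn (derivWithin (derivWithin w (Ici 0)) (Ici 0)) (fun t => g t - η ^ 2 • w t) (Ici 0) :=
  fun t ht => by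
    rw [derivWithin_congr hw.derivWithin_eqOn (hw.derivWithin_eqOn ht)]
    exact (hw.hasDerivWithinAt_velocity t ht).derivWithin (uniqueDiffOn_Ici 0 t ht)

theorem contDiffOn (hw : IsOscillatorSolution η g w v) (hg : ContinuousOn g (Ici 0)) :
    ContDiffOn ℝ 2 w (Ici 0) := by
  have hdiff : DifferentiableOn ℝ w (Ici 0) := fun t ht =>
    (hw.hasDerivWithinAt t ht).differentiableWithinAt
  have hdiff' : DifferentiableOn ℝ (derivWithin w (Ici 0)) (Ici 0) :=
    DifferentiableOn.congr (fun t ht => (hw.hasDerivWithinAt_velocity t ht).differentiableWithinAt)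
      hw.derivWithin_eqOn
  have hcont : ContinuousOn (derivWithin (derivWithin w (Ici 0)) (Ici 0)) (Ici 0) :=
    (hg.sub (hdiff.continuousOn.const_smul (η ^ 2))).congr hw.derivWithin_derivWithin_eqOn
  rw [← one_add_one_eq_two, contDiffOn_succ_iff_derivWithin (uniqueDiffOn_Ici 0),
    contDiffOn_one_iff_derivWithin (uniqueDiffOn_Ici 0)]
  exact ⟨hdiff, by simp, hdiff', hcont⟩

theorem of_contDiffOn (hw : ContDiffOn ℝ 2 w (Ici 0))
    (hode : ∀ t, 0 ≤ t → derivWithin (derivWithin w (Ici 0)) (Ici 0) t + η ^ 2 • w t = g t) :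
    IsOscillatorSolution η g w (derivWithin w (Ici 0)) where
  hasDerivWithinAt t ht := (hw.differentiableOn two_ne_zero t ht).hasDerivWithinAt
  hasDerivWithinAt_velocity t ht := by
    have hw₁ : ContDiffOn ℝ 1 (derivWithin w (Ici 0)) (Ici 0) :=
      hw.derivWithin (uniqueDiffOn_Ici 0) one_add_one_eq_two.le
    rw [← hode t ht, add_sub_cancel_right]
    exact (hw₁.differentiableOn one_ne_zero t ht).hasDerivWithinAt

end IsOscillatorSolution

-- Variation of constants: `P t = ∫₀ᵗ S (t - s) • g s ds`, with `S (t - s)` expanded so that only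
-- integrals with integrand independent of `t` occur.
theorem exists_isOscillatorSolution_zero_data [CompleteSpace E] (η : ℂ)
    (hg : ContinuousOn g (Ici 0)) :
    ∃ P Q : ℝ → E, IsOscillatorSolution η g P Q ∧ P 0 = 0 ∧ Q 0 = 0 := by
  let Ic (t : ℝ) : E := ∫ s in (0 : ℝ)..t, cos (η * s) • g s
  let Is (t : ℝ) : E := ∫ s in (0 : ℝ)..t, oscSine η s • g s
  have hIc : ∀ t ∈ Ici (0 : ℝ), HasDerivWithinAt Ic (cos (η * t) • g t) (Ici 0) t := fun t ht =>
    hasDerivWithinAt_integral_Ici (ContinuousOn.smul (by fun_prop) hg) ht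
  have hIs : ∀ t ∈ Ici (0 : ℝ), HasDerivWithinAt Is (oscSine η t • g t) (Ici 0) t := fun t ht =>
    hasDerivWithinAt_integral_Ici ((continuous_oscSine η).continuousOn.smul hg) ht
  refine ⟨fun t => oscSine η t • Ic t - cos (η * t) • Is t,
    fun t => cos (η * t) • Ic t + (η ^ 2 * oscSine η t) • Is t,
    ⟨fun t ht => ?_, fun t ht => ?_⟩, by simp [Ic, Is], by simp [Ic, Is]⟩
  · have h := ((hasDerivAt_oscSine η t).hasDerivWithinAt.fun_smul (hIc t ht)).sub
      ((hasDerivAt_cos_const_mul_ofReal η t).hasDerivWithinAt.fun_smul (hIs t ht))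
    exact h.congr_deriv (by module)
  · have h := ((hasDerivAt_cos_const_mul_ofReal η t).hasDerivWithinAt.fun_smul (hIc t ht)).add
      (((hasDerivAt_oscSine η t).const_mul (η ^ 2)).hasDerivWithinAt.fun_smul (hIs t ht))
    refine h.congr_deriv ?_
    linear_combination (norm := module) cos_sq_add_sq_mul_oscSine_sq η t • g t

end ForcedOscillator

section Multipoint

open Complex (cos)

variable {E ι : Type*} [NormedAddCommGroup E] [NormedSpace ℂ E] [Fintype ι]
  {η : ℂ} {lam : ι → ℝ} {α β : ι → ℂ} {g w v : ℝ → E} {a c : E}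

/-- `IsMultipointOscSol` for a complex frequency, vector-valued functions and an arbitrary finite
index type. -/
structure IsMultipointOscillatorSolution (η : ℂ) (lam : ι → ℝ) (α β : ι → ℂ) (g : ℝ → E)
    (a c : E) (w : ℝ → E) : Prop where
  contDiffOn : ContDiffOn ℝ 2 w (Ici 0)
  ode : ∀ t : ℝ, 0 ≤ t → derivWithin (derivWithin w (Ici 0)) (Ici 0) t + η ^ 2 • w t = g t
  position : w 0 = a + ∑ k, α k • w (lam k)
  velocity : derivWithin w (Ici 0) 0 = c + ∑ k, β k • derivWithin w (Ici 0) (lam k)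

theorem isMultipointOscSol_iff {η : ℝ} {m : ℕ} {lam : Fin m → ℝ} {α β : Fin m → ℂ} {g : ℝ → ℂ}
    {a c : ℂ} {w : ℝ → ℂ} :
    IsMultipointOscSol η lam α β g a c w ↔
      IsMultipointOscillatorSolution (η : ℂ) lam α β g a c w :=
  ⟨fun ⟨hdiff, hode, hpos, hvel⟩ => ⟨hdiff, hode, hpos, hvel⟩,
    fun h => ⟨h.contDiffOn, h.ode, h.position, h.velocity⟩⟩

theorem eq_add_sum_smul_iff {R V : Type*} [CommRing R] [AddCommGroup V] [Module R V]
    (γ c s : ι → R) (p : ι → V) (b x y : V) :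
    x = b + ∑ k, γ k • (c k • x + s k • y + p k) ↔
      (1 - ∑ k, γ k * c k) • x - (∑ k, γ k * s k) • y = b + ∑ k, γ k • p k := by
  simp only [smul_add, smul_smul, Finset.sum_add_distrib, ← Finset.sum_smul]
  constructor <;> intro h <;> linear_combination (norm := module) h

theorem IsOscillatorSolution.isMultipointOscillatorSolution_iff {P Q : ℝ → E}
    (hw : IsOscillatorSolution η g w v) (hP : IsOscillatorSolution η g P Q) (hP₀ : P 0 = 0)
    (hQ₀ : Q 0 = 0) (hg : ContinuousOn g (Ici 0)) (hlam : ∀ k, 0 ≤ lam k) :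
    IsMultipointOscillatorSolution η lam α β g a c w ↔
      (1 - ∑ k, α k * cos (η * lam k)) • w 0 - (∑ k, α k * oscSine η (lam k)) • v 0
          = a + ∑ k, α k • P (lam k) ∧
        (1 - ∑ k, β k * cos (η * lam k)) • v 0
            - (∑ k, β k * -(η ^ 2 * oscSine η (lam k))) • w 0
          = c + ∑ k, β k • Q (lam k) := by
  obtain ⟨hwP, hvQ⟩ := hP.eqOn_add_homogeneous hP₀ hQ₀ hw
  have hposition : ∑ k, α k • w (lam k)
      = ∑ k, α k • (cos (η * lam k) • w 0 + oscSine η (lam k) • v 0 + P (lam k)) :=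
    Finset.sum_congr rfl fun k _ => by rw [hwP (hlam k)]
  have hvelocity : ∑ k, β k • derivWithin w (Ici 0) (lam k)
      = ∑ k, β k • (cos (η * lam k) • v 0 + (-(η ^ 2 * oscSine η (lam k))) • w 0 + Q (lam k)) :=
    Finset.sum_congr rfl fun k _ => by rw [hw.derivWithin_eqOn (hlam k), hvQ (hlam k)]
  rw [← eq_add_sum_smul_iff, ← eq_add_sum_smul_iff, ← hposition, ← hvelocity,
    ← hw.derivWithin_eqOn self_mem_Ici]
  exact ⟨fun h => ⟨h.position, h.velocity⟩, fun h => ⟨hw.contDiffOn hg, fun t ht => by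
    rw [hw.derivWithin_derivWithin_eqOn ht, sub_add_cancel], h.1, h.2⟩⟩

end Multipoint

theorem multipoint_oscillator_existence_uniqueness_general
    {E ι : Type*} [NormedAddCommGroup E] [NormedSpace ℂ E] [CompleteSpace E] [Fintype ι]
    (η : ℂ) (lam : ι → ℝ) (hlam : ∀ k, 0 ≤ lam k) (α β : ι → ℂ)
    (hD0 : 1 - ∑ k, (α k + β k) * Complex.cos (lam k * η)
        + ∑ i, ∑ j, α i * β j * Complex.cos (lam i * η - lam j * η) ≠ 0)
    (g : ℝ → E) (hg : ContinuousOn g (Ici 0)) (a c : E) :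
    ∃ w : ℝ → E, IsMultipointOscillatorSolution η lam α β g a c w
      ∧ ∀ w' : ℝ → E, IsMultipointOscillatorSolution η lam α β g a c w' →
          EqOn w' w (Ici 0) := by
  rw [multipoint_det_eq] at hD0
  obtain ⟨P, Q, hP, hP₀, hQ₀⟩ := exists_isOscillatorSolution_zero_data η hg
  obtain ⟨⟨x, y⟩, hxy, hunique⟩ := existsUnique_linear_system_of_det_ne_zero hD0
    (a + ∑ k, α k • P (lam k)) (c + ∑ k, β k • Q (lam k))
  have hw := hP.add_homogeneous x y
  refine ⟨_, (hw.isMultipointOscillatorSolution_iff hP hP₀ hQ₀ hg hlam).mpr ?_, fun w' hw' => ?_⟩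
  · simpa [oscSine_zero, hP₀, hQ₀] using hxy
  · have hsol := IsOscillatorSolution.of_contDiffOn hw'.contDiffOn hw'.ode
    have hdata : (w' 0, derivWithin w' (Ici 0) 0) = (x, y) :=
      hunique _ ((hsol.isMultipointOscillatorSolution_iff hP hP₀ hQ₀ hg hlam).mp hw')
    rw [Prod.mk.injEq] at hdata
    exact (hsol.eqOn_of_initial_eq hw (by simp [oscSine_zero, hP₀, hdata.1])
      (by simp [oscSine_zero, hQ₀, hdata.2])).1

theorem multipoint_oscillator_existence_uniqueness
    (η : ℝ) (hη : 0 < η) (m : ℕ) (lam : Fin m → ℝ) (hlam : ∀ k, 0 < lam k)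
    (α β : Fin m → ℂ)
    (hD0 : (1 : ℂ) - ∑ k, (α k + β k) * (Real.cos (lam k * η) : ℂ)
        + ∑ i, ∑ j, α i * β j * (Real.cos (lam i * η - lam j * η) : ℂ) ≠ 0)
    (g : ℝ → ℂ) (hg : ContinuousOn g (Set.Ici 0)) (a c : ℂ) :
    ∃ w : ℝ → ℂ, IsMultipointOscSol η lam α β g a c w
      ∧ ∀ w' : ℝ → ℂ, IsMultipointOscSol η lam α β g a c w' →
          Set.EqOn w' w (Set.Ici 0) := by
  simp only [isMultipointOscSol_iff]
  push_cast at hD0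
  exact multipoint_oscillator_existence_uniqueness_general
    η lam (fun k => (hlam k).le) α β hD0 g hg a c
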